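/- Let (a_k)_{k∈ℤ} ∈ ℓ²(ℤ, ℂ) with energy E = Σ_k |a_k|², and suppose |a_k| ≤ C/⌊k⌋^s for all k, where s > 1/2, C > 0 and ⌊k⌋ = |k| for k ≠ 0, ⌊0⌋ = 1. Then the convolution term N_k = -i(k/2) Σ_{k₁∈ℤ} a_{k₁} a_{k-k₁} satisfies |N_k| ≤ √E · C · (2^{s-1/2} + 2^{s-1}/√(2s-1)) / |k|^{s-3/2} for all k ∈ ℤ \ {0}. -/

import Mathlib

/-- `⌊k⌋ = |k|` for `k ≠ 0` and `⌊0⌋ = 1`. -/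
noncomputable def nk (k : ℤ) : ℝ := if k = 0 then 1 else |(k : ℝ)|

/-!
Folding along `j ↦ k - j`: if `w j + w (k - j) ≥ 2`, then, for `b ≥ 0`,
`∑ b j * b (k - j) ≤ ∑ w j * b j * b (k - j)`, and a single Cauchy–Schwarz bounds this by
`√(∑ b j ^ 2) * √(∑ (w j * b j) ^ 2)`. With `k > 0` and `n = ⌈k / 2⌉`, the weight `w` can be chosen
to vanish on `[-n, n)`, where the decay of `b` gives nothing, to equal `2` on `[n, n + k]`, and to
equal `1` elsewhere. The decay of `b` then yields
`∑ (w j * b j) ^ 2 ≤ C ^ 2 * n ^ (1 - 2 * s) * (2 + √(2 / (2 * s - 1))) ^ 2`,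
the square being completed from two tails (each at most `n ^ (1 - 2 * s) / (2 * s - 1)`) and the
block `[n, n + k]`.
-/

open Set Function

section CauchySchwarz

variable {ι : Type*} {f g : ι → ℝ}

theorem summable_mul_of_summable_sq (hf : Summable fun i => f i ^ 2)
    (hg : Summable fun i => g i ^ 2) : Summable fun i => f i * g i := by
  refine (hf.add hg).of_norm_bounded fun i => ?_
  rw [Real.norm_eq_abs, abs_le]
  constructor <;> nlinarith [sq_nonneg (f i + g i), sq_nonneg (f i - g i)]

theorem tsum_mul_le_sqrt_tsum_mul_sqrt_tsum (hf : Summable fun i => f i ^ 2)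
    (hg : Summable fun i => g i ^ 2) :
    ∑' i, f i * g i ≤ √(∑' i, f i ^ 2) * √(∑' i, g i ^ 2) := by
  refine (summable_mul_of_summable_sq hf hg).tsum_le_of_sum_le fun s => ?_
  refine (Real.sum_mul_le_sqrt_mul_sqrt s f g).trans ?_
  gcongr
  · exact hf.sum_le_tsum s fun i _ => sq_nonneg (f i)
  · exact hg.sum_le_tsum s fun i _ => sq_nonneg (g i)

theorem tsum_mul_comp_le_of_two_le_weight {σ : ι → ι} (hσ : Involutive σ) {w : ι → ℝ}
    (hf_nonneg : ∀ i, 0 ≤ f i) (hw : ∀ i, 2 ≤ w i + w (σ i))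
    (hf : Summable fun i => f i ^ 2) (hwf : Summable fun i => (w i * f i) ^ 2) :
    ∑' i, f i * f (σ i) ≤ √(∑' i, f i ^ 2) * √(∑' i, (w i * f i) ^ 2) := by
  have hfσ : Summable fun i => f (σ i) ^ 2 := hσ.toPerm.summable_iff.mpr hf
  have hσ_tsum (h : ι → ℝ) : ∑' i, h (σ i) = ∑' i, h i := hσ.toPerm.tsum_eq h
  have hfold : Summable fun i => w i * f i * f (σ i) := summable_mul_of_summable_sq hwf hfσ
  have hfold' : Summable fun i => w (σ i) * f (σ i) * f i :=
    (hσ.toPerm.summable_iff.mpr hfold).congr fun i => by simp [hσ i]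
  have hswap : ∑' i, w (σ i) * f (σ i) * f i = ∑' i, w i * f i * f (σ i) := by
    simpa only [hσ _] using hσ_tsum fun i => w i * f i * f (σ i)
  have hsymm : 2 * ∑' i, f i * f (σ i) ≤ 2 * ∑' i, w i * f i * f (σ i) := by
    rw [two_mul (∑' i, w i * f i * f (σ i))]
    nth_rw 2 [← hswap]
    rw [← hfold.tsum_add hfold', ← tsum_mul_left]
    refine ((summable_mul_of_summable_sq hf hfσ).mul_left 2).tsum_le_tsum (fun i => ?_)
      (hfold.add hfold')
    nlinarith [mul_le_mul_of_nonneg_right (hw i) (mul_nonneg (hf_nonneg i) (hf_nonneg (σ i)))]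
  calc ∑' i, f i * f (σ i) ≤ ∑' i, w i * f i * f (σ i) := by linarith
    _ ≤ √(∑' i, (w i * f i) ^ 2) * √(∑' i, f (σ i) ^ 2) :=
        tsum_mul_le_sqrt_tsum_mul_sqrt_tsum hwf hfσ
    _ = √(∑' i, f i ^ 2) * √(∑' i, (w i * f i) ^ 2) := by
        rw [hσ_tsum fun i => f i ^ 2, mul_comm]

end CauchySchwarz

section PowerSums

variable {r : ℝ} {n : ℕ}

theorem tsum_indicator_Ioi_rpow_neg_le (hr : 1 < r) (hn : 0 < n) :
    ∑' j : ℤ, (Ioi (n : ℤ)).indicator (fun j : ℤ => |(j : ℝ)| ^ (-r)) j ≤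
      (n : ℝ) ^ (1 - r) / (r - 1) := by
  have hn' : (0 : ℝ) < n := by exact_mod_cast hn
  have hanti : AntitoneOn (fun x : ℝ => x ^ (-r)) (Ici (n : ℝ)) :=
    (Real.antitoneOn_rpow_Ioi_of_exponent_nonpos (by linarith)).mono (Ici_subset_Ioi.mpr hn')
  have hshift : Injective fun i : ℕ => ((i + n + 1 : ℕ) : ℤ) := fun i j h => by
    simpa using h
  rw [← hshift.tsum_eq]
  · calc _ = ∑' i : ℕ, ((i + n + 1 : ℕ) : ℝ) ^ (-r) := by
          refine tsum_congr fun i => ?_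
          rw [indicator_of_mem (by simp only [mem_Ioi]; omega), Int.cast_natCast, Nat.abs_cast]
      _ ≤ ∫ x in Ioi (n : ℝ), x ^ (-r) :=
          hanti.tsum_comp_add_le_integral n (integrableOn_Ioi_rpow_of_lt (by linarith) hn')
            fun x hx => Real.rpow_nonneg (hn'.trans hx).le _
      _ = (n : ℝ) ^ (1 - r) / (r - 1) := by
          rw [integral_Ioi_rpow_of_lt (by linarith) hn', neg_add_eq_sub, ← neg_sub r 1,
            neg_div_neg_eq]
  · refine support_indicator_subset.trans fun j hj => ⟨(j - n - 1).toNat, ?_⟩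
    simp only [mem_Ioi] at hj ⊢
    omega

theorem tsum_indicator_Iio_rpow_neg_le (hr : 1 < r) (hn : 0 < n) :
    ∑' j : ℤ, (Iio (-n : ℤ)).indicator (fun j : ℤ => |(j : ℝ)| ^ (-r)) j ≤
      (n : ℝ) ^ (1 - r) / (r - 1) := by
  rw [← (Equiv.neg ℤ).tsum_eq]
  convert tsum_indicator_Ioi_rpow_neg_le hr hn using 3 with j
  simp [indicator_apply]

theorem tsum_indicator_Ioc_rpow_neg_le (hr : 1 < r) (hn : 0 < n) {k : ℕ} (hk : k ≤ 2 * n) :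
    ∑' j : ℤ, (Ioc (n : ℤ) (n + k)).indicator (fun j : ℤ => |(j : ℝ)| ^ (-r)) j ≤
      √(2 / (r - 1)) * (n : ℝ) ^ (1 - r) := by
  have hn' : (0 : ℝ) < n := by exact_mod_cast hn
  have : 0 < r - 1 := by linarith
  set P := (n : ℝ) ^ (1 - r)
  set S := ∑' j : ℤ, (Ioc (n : ℤ) (n + k)).indicator (fun j : ℤ => |(j : ℝ)| ^ (-r)) j with hS
  have hS_nonneg : 0 ≤ S := tsum_nonneg fun j => indicator_nonneg (fun _ _ => by positivity) j
  have hp := Real.summable_abs_int_rpow hr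
  have htail : S ≤ P / (r - 1) := by
    refine le_trans ?_ (tsum_indicator_Ioi_rpow_neg_le hr hn)
    exact (hp.indicator _).tsum_le_tsum
      (indicator_le_indicator_of_subset Ioc_subset_Ioi_self fun _ => by positivity)
      (hp.indicator _)
  have hcount : S ≤ 2 * P := by
    have hterm : ∀ j ∈ Finset.Ioc (n : ℤ) (n + k), |(j : ℝ)| ^ (-r) ≤ (n : ℝ) ^ (-r) := by
      intro j hj
      have hj' : (n : ℝ) ≤ j := by exact_mod_cast (Finset.mem_Ioc.mp hj).1.le
      exact Real.rpow_le_rpow_of_nonpos hn' (hj'.trans (le_abs_self _)) (by linarith)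
    calc S = ∑ j ∈ Finset.Ioc (n : ℤ) (n + k), |(j : ℝ)| ^ (-r) := by
          rw [hS, ← Finset.coe_Ioc, ← sum_eq_tsum_indicator]
      _ ≤ k * (n : ℝ) ^ (-r) := by simpa using Finset.sum_le_card_nsmul _ _ _ hterm
      _ ≤ (2 * n) * (n : ℝ) ^ (-r) := by gcongr; exact_mod_cast hk
      _ = 2 * P := by
          rw [mul_assoc, ← Real.rpow_one_add' hn'.le (by linarith), ← sub_eq_add_neg]
  -- `S` is at most the geometric mean of the two bounds.
  refine abs_le_of_sq_le_sq' ?_ (by positivity) |>.2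
  calc S ^ 2 ≤ 2 * P * (P / (r - 1)) := by
        rw [sq]; gcongr
    _ = (√(2 / (r - 1)) * P) ^ 2 := by
        rw [mul_pow, Real.sq_sqrt (by positivity)]; ring

end PowerSums

/-- The weight that folds `∑ j, b j * b (k - j)` along `j ↦ k - j`: the terms with `j` in
`[-n, k - n]` are moved onto their mirror images in `[n, n + k]`, all others stay in place. Where
the two intervals overlap the weight is `2`, so that it adds up to at least `2` over `j` and
`k - j`. -/
noncomputable def foldWeight (n k j : ℤ) : ℝ :=
  if n ≤ j ∧ j ≤ n + k then 2 else if -n ≤ j ∧ j ≤ k - n then 0 else 1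

theorem two_le_foldWeight_add (n k j : ℤ) :
    2 ≤ foldWeight n k j + foldWeight n k (k - j) := by
  unfold foldWeight
  split_ifs <;> first | omega | norm_num

theorem sq_foldWeight_mul_le {n k : ℤ} (hn : 0 ≤ n) (hk : 2 * n ≤ k + 1) {f : ℤ → ℝ}
    (hf : ∀ j, 0 ≤ f j) (j : ℤ) :
    foldWeight n k j ^ 2 * f j ≤
      (Ioi n).indicator f j + (Iio (-n)).indicator f j + 3 * (Ioc n (n + k)).indicator f j +
        4 * ({n} : Set ℤ).indicator f j := by
  have hfj := hf j
  simp only [foldWeight, indicator_apply, mem_Ioi, mem_Iio, mem_Ioc, mem_singleton_iff]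
  split_ifs <;> first | linarith | omega

theorem foldWeight_zero {n k : ℤ} (hn : 0 < n) (hk : n ≤ k) : foldWeight n k 0 = 0 := by
  rw [foldWeight, if_neg (by omega), if_pos (by omega)]

theorem summable_sq_foldWeight_mul (n k : ℤ) {f : ℤ → ℝ} (hf : Summable f) :
    Summable fun j => foldWeight n k j ^ 2 * f j := by
  refine (hf.norm.mul_left 4).of_norm_bounded fun j => ?_
  rw [norm_mul]
  gcongr
  unfold foldWeight
  split_ifs <;> norm_num

theorem tsum_sq_foldWeight_mul_rpow_neg_le {r : ℝ} (hr : 1 < r) {n k : ℕ} (hn : 0 < n)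
    (hk : k ≤ 2 * n) (hk' : 2 * n ≤ k + 1) :
    ∑' j : ℤ, foldWeight n k j ^ 2 * |(j : ℝ)| ^ (-r) ≤
      (n : ℝ) ^ (1 - r) * (2 + √(2 / (r - 1))) ^ 2 := by
  set p : ℤ → ℝ := fun j => |(j : ℝ)| ^ (-r)
  have hp : Summable p := Real.summable_abs_int_rpow hr
  have hright := tsum_indicator_Ioi_rpow_neg_le hr hn
  have hleft := tsum_indicator_Iio_rpow_neg_le hr hn
  have hnear := tsum_indicator_Ioc_rpow_neg_le hr hn hk
  have hdiag : ∑' j : ℤ, ({(n : ℤ)} : Set ℤ).indicator p j ≤ (n : ℝ) ^ (1 - r) := by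
    rw [← tsum_subtype, tsum_singleton]
    simp only [p, Int.cast_natCast, Nat.abs_cast]
    exact Real.rpow_le_rpow_of_exponent_le (by exact_mod_cast hn) (by linarith)
  have hdecomp := hasSum_le
    (sq_foldWeight_mul_le (by omega) (by omega) fun j => by positivity)
    (summable_sq_foldWeight_mul n k hp).hasSum
    (((hp.indicator (Ioi (n : ℤ))).hasSum.add (hp.indicator (Iio (-n : ℤ))).hasSum).add
      ((hp.indicator (Ioc (n : ℤ) (n + k))).hasSum.mul_left 3) |>.add
      ((hp.indicator {(n : ℤ)}).hasSum.mul_left 4))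
  have : 0 ≤ (n : ℝ) ^ (1 - r) := by positivity
  have hsqrt : √(2 / (r - 1)) ^ 2 = 2 / (r - 1) := Real.sq_sqrt (by bound)
  calc _ ≤ (n : ℝ) ^ (1 - r) / (r - 1) + (n : ℝ) ^ (1 - r) / (r - 1) +
          3 * (√(2 / (r - 1)) * (n : ℝ) ^ (1 - r)) + 4 * (n : ℝ) ^ (1 - r) := by linarith
    _ = (n : ℝ) ^ (1 - r) * (4 + 3 * √(2 / (r - 1)) + √(2 / (r - 1)) ^ 2) := by
        rw [hsqrt]; ring
    _ ≤ (n : ℝ) ^ (1 - r) * (2 + √(2 / (r - 1))) ^ 2 := by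
        gcongr
        linarith [Real.sqrt_nonneg (2 / (r - 1))]

section Convolution

variable {C s : ℝ} {b : ℤ → ℝ}

theorem tsum_sq_foldWeight_mul_le (hs : 1 / 2 < s) (hb_nonneg : ∀ j, 0 ≤ b j)
    (hsum : Summable fun j => b j ^ 2) (hb : ∀ j ≠ 0, b j ≤ C / |(j : ℝ)| ^ s) {n k : ℕ}
    (hn : 0 < n) (hk : k ≤ 2 * n) (hk' : 2 * n ≤ k + 1) :
    ∑' j, (foldWeight n k j * b j) ^ 2 ≤
      C ^ 2 * ((n : ℝ) ^ (1 - 2 * s) * (2 + √(2 / (2 * s - 1))) ^ 2) := by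
  have hb_sq (j : ℤ) (hj : j ≠ 0) : b j ^ 2 ≤ C ^ 2 * |(j : ℝ)| ^ (-(2 * s)) := by
    calc b j ^ 2 ≤ (C / |(j : ℝ)| ^ s) ^ 2 := by gcongr; exacts [hb_nonneg j, hb j hj]
      _ = C ^ 2 * |(j : ℝ)| ^ (-(2 * s)) := by
          rw [div_pow, Real.rpow_neg (abs_nonneg _), mul_comm 2 s, Real.rpow_mul (abs_nonneg _),
            Real.rpow_two, div_eq_mul_inv]
  have hterm (j : ℤ) : foldWeight n k j ^ 2 * b j ^ 2 ≤
      C ^ 2 * (foldWeight n k j ^ 2 * |(j : ℝ)| ^ (-(2 * s))) := by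
    rw [mul_left_comm]
    rcases eq_or_ne j 0 with rfl | hj
    · simp [foldWeight_zero (n := n) (k := k) (by omega) (by omega)]
    · gcongr; exact hb_sq j hj
  have hp : Summable fun j : ℤ => |(j : ℝ)| ^ (-(2 * s)) :=
    Real.summable_abs_int_rpow (by linarith)
  calc ∑' j, (foldWeight n k j * b j) ^ 2
      ≤ C ^ 2 * ∑' j : ℤ, foldWeight n k j ^ 2 * |(j : ℝ)| ^ (-(2 * s)) := by
        simp only [mul_pow, ← tsum_mul_left]
        exact (summable_sq_foldWeight_mul n k hsum).tsum_le_tsum hterm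
          ((summable_sq_foldWeight_mul n k hp).mul_left _)
    _ ≤ C ^ 2 * ((n : ℝ) ^ (1 - 2 * s) * (2 + √(2 / (2 * s - 1))) ^ 2) := by
        gcongr
        exact tsum_sq_foldWeight_mul_rpow_neg_le (by linarith) hn hk hk'

theorem tsum_mul_sub_le_of_pos (hs : 1 / 2 < s) (hb_nonneg : ∀ j, 0 ≤ b j)
    (hsum : Summable fun j => b j ^ 2) (hb : ∀ j ≠ 0, b j ≤ C / |(j : ℝ)| ^ s)
    {k : ℕ} (hk : 0 < k) :
    ∑' j, b j * b (k - j) ≤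
      √(∑' j, b j ^ 2) * (C * ((k : ℝ) / 2) ^ (1 / 2 - s) * (2 + √(2 / (2 * s - 1)))) := by
  obtain ⟨n, hkn, hnk⟩ : ∃ n : ℕ, k ≤ 2 * n ∧ 2 * n ≤ k + 1 := ⟨(k + 1) / 2, by omega, by omega⟩
  have hC : 0 ≤ C := (hb_nonneg 1).trans (by simpa using hb 1 one_ne_zero)
  have hk_half : 0 < (k : ℝ) / 2 := by positivity
  have hk_half_le : (k : ℝ) / 2 ≤ n := by
    rw [div_le_iff₀' two_pos]; exact_mod_cast hkn
  have hwb : Summable fun j => (foldWeight n k j * b j) ^ 2 := by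
    simpa only [mul_pow] using summable_sq_foldWeight_mul n k hsum
  have hw : ∑' j, (foldWeight n k j * b j) ^ 2 ≤
      (C * ((k : ℝ) / 2) ^ (1 / 2 - s) * (2 + √(2 / (2 * s - 1)))) ^ 2 :=
    calc _ ≤ C ^ 2 * ((n : ℝ) ^ (1 - 2 * s) * (2 + √(2 / (2 * s - 1))) ^ 2) :=
          tsum_sq_foldWeight_mul_le hs hb_nonneg hsum hb (by omega) hkn hnk
      _ ≤ C ^ 2 * (((k : ℝ) / 2) ^ (1 - 2 * s) * (2 + √(2 / (2 * s - 1))) ^ 2) := by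
          gcongr C ^ 2 * (?_ * _)
          exact Real.rpow_le_rpow_of_nonpos hk_half hk_half_le (by linarith)
      _ = _ := by
          rw [mul_pow, mul_pow, ← Real.rpow_mul_natCast hk_half.le, mul_assoc]
          congr 4
          push_cast; ring
  refine (tsum_mul_comp_le_of_two_le_weight (sub_sub_cancel (k : ℤ)) hb_nonneg
    (two_le_foldWeight_add n k) hsum hwb).trans ?_
  gcongr
  exact Real.sqrt_le_iff.mpr ⟨by positivity, hw⟩

theorem tsum_mul_sub_le (hs : 1 / 2 < s) (hb_nonneg : ∀ j, 0 ≤ b j)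
    (hsum : Summable fun j => b j ^ 2) (hb : ∀ j ≠ 0, b j ≤ C / |(j : ℝ)| ^ s)
    {k : ℤ} (hk : k ≠ 0) :
    ∑' j, b j * b (k - j) ≤
      √(∑' j, b j ^ 2) * (C * (|(k : ℝ)| / 2) ^ (1 / 2 - s) * (2 + √(2 / (2 * s - 1)))) := by
  obtain ⟨n, rfl | rfl⟩ := Int.eq_nat_or_neg k
  · simpa using tsum_mul_sub_le_of_pos hs hb_nonneg hsum hb (k := n) (by omega)
  · have hreflect := tsum_mul_sub_le_of_pos (b := fun j => b (-j)) hs (fun j => hb_nonneg (-j))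
      ((Equiv.neg ℤ).summable_iff.mpr hsum)
      (fun j hj => by simpa using hb (-j) (neg_ne_zero.mpr hj)) (k := n) (by omega)
    have hneg (f : ℤ → ℝ) : ∑' j, f (-j) = ∑' j, f j := (Equiv.neg ℤ).tsum_eq f
    have hconv : ∑' j, b (-j) * b (-(n - j)) = ∑' j, b j * b (-n - j) := by
      rw [← hneg fun j => b j * b (-n - j)]
      exact tsum_congr fun j => by ring_nf
    rw [hconv, hneg fun j => b j ^ 2] at hreflect
    simpa using hreflect

theorem norm_tsum_mul_sub_le {R : Type*} [NonUnitalSeminormedRing R] {a : ℤ → R}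
    (hs : 1 / 2 < s) (hsum : Summable fun j => ‖a j‖ ^ 2)
    (ha : ∀ j ≠ 0, ‖a j‖ ≤ C / |(j : ℝ)| ^ s) {k : ℤ} (hk : k ≠ 0) :
    ‖∑' j, a j * a (k - j)‖ ≤
      √(∑' j, ‖a j‖ ^ 2) * (C * (|(k : ℝ)| / 2) ^ (1 / 2 - s) * (2 + √(2 / (2 * s - 1)))) := by
  have hsum' : Summable fun j => ‖a (k - j)‖ ^ 2 := (Equiv.subLeft k).summable_iff.mpr hsum
  have hprod : Summable fun j => ‖a j‖ * ‖a (k - j)‖ := summable_mul_of_summable_sq hsum hsum'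
  calc ‖∑' j, a j * a (k - j)‖ ≤ ∑' j, ‖a j‖ * ‖a (k - j)‖ :=
        tsum_of_norm_bounded hprod.hasSum fun j => norm_mul_le _ _
    _ ≤ _ := tsum_mul_sub_le hs (fun j => norm_nonneg (a j)) hsum ha hk

end Convolution

theorem half_mul_half_rpow_mul_two_add_sqrt {s x : ℝ} (hx : 0 < x) :
    x / 2 * ((x / 2) ^ (1 / 2 - s) * (2 + √(2 / (2 * s - 1)))) =
      (2 ^ (s - 1 / 2) + 2 ^ (s - 1) / √(2 * s - 1)) / x ^ (s - 3 / 2) := by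
  have hpow : x / 2 * (x / 2) ^ (1 / 2 - s) = 2 ^ (s - 3 / 2) / x ^ (s - 3 / 2) := by
    rw [mul_comm, ← Real.rpow_add_one (by positivity),
      show 1 / 2 - s + 1 = -(s - 3 / 2) by ring, Real.rpow_neg (by positivity),
      Real.div_rpow hx.le two_pos.le, inv_div]
  have htwo : (2 : ℝ) ^ (s - 1 / 2) = 2 ^ (s - 3 / 2) * 2 := by
    rw [← Real.rpow_add_one two_ne_zero]; congr 1; ring
  have hsqrt_two : (2 : ℝ) ^ (s - 1) = 2 ^ (s - 3 / 2) * √2 := by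
    rw [Real.sqrt_eq_rpow, ← Real.rpow_add two_pos]; congr 1; ring
  rw [← mul_assoc, hpow, htwo, hsqrt_two, Real.sqrt_div two_pos.le]
  ring

theorem stmt_2_general {R : Type*} [NonUnitalSeminormedRing R] [NormedSpace ℂ R] [CompleteSpace R]
    {a : ℤ → R} {C s : ℝ} (hs : 1 / 2 < s) (hsum : Summable fun j => ‖a j‖ ^ 2)
    (ha : ∀ j ≠ 0, ‖a j‖ ≤ C / |(j : ℝ)| ^ s) {k : ℤ} (hk : k ≠ 0) :
    ‖(-Complex.I * ((k : ℂ) / 2)) • ∑' j, a j * a (k - j)‖ ≤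
      √(∑' j, ‖a j‖ ^ 2) * C * (2 ^ (s - 1 / 2) + 2 ^ (s - 1) / √(2 * s - 1)) /
        |(k : ℝ)| ^ (s - 3 / 2) := by
  have hfactor : ‖-Complex.I * ((k : ℂ) / 2)‖ = |(k : ℝ)| / 2 := by simp
  have hk_pos : 0 < |(k : ℝ)| := abs_pos.mpr (Int.cast_ne_zero.mpr hk)
  calc _ = |(k : ℝ)| / 2 * ‖∑' j, a j * a (k - j)‖ := by rw [norm_smul, hfactor]
    _ ≤ |(k : ℝ)| / 2 * (√(∑' j, ‖a j‖ ^ 2) *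
          (C * (|(k : ℝ)| / 2) ^ (1 / 2 - s) * (2 + √(2 / (2 * s - 1))))) := by
        gcongr
        exact norm_tsum_mul_sub_le hs hsum ha hk
    _ = √(∑' j, ‖a j‖ ^ 2) * C *
          (|(k : ℝ)| / 2 * ((|(k : ℝ)| / 2) ^ (1 / 2 - s) * (2 + √(2 / (2 * s - 1))))) := by ring
    _ = _ := by rw [half_mul_half_rpow_mul_two_add_sqrt hk_pos, mul_div_assoc]

theorem stmt_2 (a : ℤ → ℂ) (C s : ℝ) (hC : 0 < C) (hs : 1 / 2 < s)
    (hsum : Summable (fun k : ℤ => ‖a k‖ ^ 2))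
    (hbd : ∀ k : ℤ, ‖a k‖ ≤ C / nk k ^ s) :
    ∀ k : ℤ, k ≠ 0 →
      ‖-Complex.I * ((k : ℂ) / 2) * ∑' k₁ : ℤ, a k₁ * a (k - k₁)‖ ≤
        Real.sqrt (∑' k : ℤ, ‖a k‖ ^ 2) * C *
            (2 ^ (s - 1 / 2) + 2 ^ (s - 1) / Real.sqrt (2 * s - 1)) /
          |(k : ℝ)| ^ (s - 3 / 2) := by
  exact fun k hk => stmt_2_general hs hsum
    (fun j hj => by simpa only [nk, if_neg hj] using hbd j) hk
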